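/- arXiv:2506.09752 — 2 statements merged into one kernel-verified Lean document; each statement's English description precedes it below -/
import Mathlib

section
/- (Finite Bopp–Podolsky energy implies local integrability.) Let K : ℝ³ → ℝ be defined by K(x) = (1 - exp(-‖x‖))/‖x‖ for x ≠ 0 and K(0) = 1, and set V(f,f) = ∫_{ℝ³}∫_{ℝ³} K(x-y) f(x) f(y) dx dy. If f : ℝ³ → [0,∞) is measurable and V(f,f) < ∞, then f is locally integrable on ℝ³. -/
open MeasureTheory Real
open scoped ENNReal Classical

noncomputable section

abbrev E3 := EuclideanSpace ℝ (Fin 3)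

/-- Bopp–Podolsky kernel with `a = 1`. -/
def K1 (x : E3) : ℝ := if x = 0 then 1 else (1 - Real.exp (-‖x‖)) / ‖x‖

/-- Laplacian of `f` at `x`: sum of second derivatives along the coordinate directions. -/
def lap (f : E3 → ℝ) (x : E3) : ℝ :=
  ∑ i : Fin 3, fderiv ℝ (fun y => fderiv ℝ f y (EuclideanSpace.single i 1)) x
    (EuclideanSpace.single i 1)

/-- Bopp–Podolsky energy as an iterated lower integral, valued in `[0,∞]`. -/
def Vlin (f g : E3 → ℝ) : ℝ≥0∞ :=
  ∫⁻ x, ∫⁻ y, ENNReal.ofReal (K1 (x - y) * f x * g y)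

/-- Bopp–Podolsky energy as an iterated Bochner integral. -/
def Vr (f g : E3 → ℝ) : ℝ := ∫ x, ∫ y, K1 (x - y) * f x * g y

/-- `G` is the weak gradient of `u`. -/
def IsWeakGradient (u : E3 → ℝ) (G : E3 → E3) : Prop :=
  ∀ φ : E3 → ℝ, ContDiff ℝ (⊤ : ℕ∞) φ → HasCompactSupport φ → ∀ i : Fin 3,
    ∫ x, u x * fderiv ℝ φ x (EuclideanSpace.single i 1) = -∫ x, G x i * φ x

/-- `h` is the weak Laplacian of `u`. -/
def IsWeakLaplacian (u : E3 → ℝ) (h : E3 → ℝ) : Prop :=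
  ∀ φ : E3 → ℝ, ContDiff ℝ (⊤ : ℕ∞) φ → HasCompactSupport φ →
    ∫ x, u x * lap φ x = ∫ x, h x * φ x

/-!
Near the diagonal the kernel is bounded below by a constant `c > 0`, because
`K1 z ≥ 1 / (1 + ‖z‖)`. Hence every point has a neighbourhood `U` with
`c * (∫ x in U, f x) ^ 2 ≤ V(f, f)`, so the integral of `f` over `U` is finite.
-/

open scoped Topology

section EnergyKernel

variable {X : Type*} [MeasurableSpace X] {μ : Measure X}

lemma mul_setLIntegral_sq_le_lintegral_lintegral {κ : X → X → ℝ≥0∞} {c : ℝ≥0∞} {s : Set X}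
    (hs : MeasurableSet s) (hκ : ∀ x ∈ s, ∀ y ∈ s, c ≤ κ x y) (F : X → ℝ≥0∞) :
    c * (∫⁻ x in s, F x ∂μ) ^ 2 ≤ ∫⁻ x, ∫⁻ y, κ x y * F x * F y ∂μ ∂μ := by
  set I := ∫⁻ y in s, F y ∂μ
  calc c * I ^ 2 = c * (I * I) := by rw [sq]
    _ ≤ c * ∫⁻ x in s, F x * I ∂μ := by gcongr; exact lintegral_mul_const_le _ _
    _ ≤ ∫⁻ x in s, c * (F x * I) ∂μ := lintegral_const_mul_le _ _
    _ ≤ ∫⁻ x in s, ∫⁻ y in s, c * F x * F y ∂μ ∂μ := by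
      gcongr with x
      rw [← mul_assoc]
      exact lintegral_const_mul_le _ _
    _ ≤ ∫⁻ x in s, ∫⁻ y in s, κ x y * F x * F y ∂μ ∂μ :=
      setLIntegral_mono' hs fun x hx ↦ setLIntegral_mono' hs fun y hy ↦ by
        gcongr
        exact hκ x hx y hy
    _ ≤ ∫⁻ x in s, ∫⁻ y, κ x y * F x * F y ∂μ ∂μ := by
      gcongr
      exact Measure.restrict_le_self
    _ ≤ ∫⁻ x, ∫⁻ y, κ x y * F x * F y ∂μ ∂μ := setLIntegral_le_lintegral _ _

lemma ofReal_mul_ofReal_le_ofReal_mul (a b : ℝ) :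
    ENNReal.ofReal a * ENNReal.ofReal b ≤ ENNReal.ofReal (a * b) := by
  rcases le_total 0 a with ha | ha
  · exact (ENNReal.ofReal_mul ha).ge
  · simp only [ENNReal.ofReal_of_nonpos ha, zero_mul, zero_le]

variable [TopologicalSpace X] [OpensMeasurableSpace X]

lemma exists_mem_nhds_setLIntegral_lt_top {κ : X → X → ℝ≥0∞} {c : ℝ≥0∞} {x₀ : X} (hc : c ≠ 0)
    (hκ : ∀ᶠ p in 𝓝 (x₀, x₀), c ≤ κ p.1 p.2) {F : X → ℝ≥0∞}
    (hF : ∫⁻ x, ∫⁻ y, κ x y * F x * F y ∂μ ∂μ < ⊤) :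
    ∃ u ∈ 𝓝 x₀, ∫⁻ x in u, F x ∂μ < ⊤ := by
  rw [nhds_prod_eq] at hκ
  obtain ⟨t, ht, hκt⟩ := Filter.eventually_prod_self_iff'.mp hκ
  obtain ⟨u, hut, hu, hxu⟩ := mem_nhds_iff.mp ht
  have hsq : c * (∫⁻ x in u, F x ∂μ) ^ 2 < ⊤ :=
    (mul_setLIntegral_sq_le_lintegral_lintegral hu.measurableSet
      (fun x hx y hy ↦ hκt x (hut hx) y (hut hy)) F).trans_lt hF
  have hsq' : (∫⁻ x in u, F x ∂μ) ^ 2 < ⊤ := ENNReal.lt_top_of_mul_ne_top_right hsq.ne hc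
  exact ⟨u, hu.mem_nhds hxu, (ENNReal.pow_lt_top_iff.mp hsq').resolve_right two_ne_zero⟩

lemma locallyIntegrable_posPart_of_energy_lt_top {k : X → X → ℝ} {f : X → ℝ}
    (hf : AEStronglyMeasurable f μ) (hk : ∀ x, ∃ c > 0, ∀ᶠ p in 𝓝 (x, x), c ≤ k p.1 p.2)
    (hE : ∫⁻ x, ∫⁻ y, ENNReal.ofReal (k x y * f x * f y) ∂μ ∂μ < ⊤) :
    LocallyIntegrable f⁺ μ := by
  intro x₀
  obtain ⟨c, hc, hkc⟩ := hk x₀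
  have hpos : ∫⁻ x, ∫⁻ y, ENNReal.ofReal (k x y) * ENNReal.ofReal (f x) *
      ENNReal.ofReal (f y) ∂μ ∂μ < ⊤ := by
    refine lt_of_le_of_lt (lintegral_mono fun x ↦ lintegral_mono fun y ↦ ?_) hE
    exact (mul_le_mul_left (ofReal_mul_ofReal_le_ofReal_mul _ _) _).trans
      (ofReal_mul_ofReal_le_ofReal_mul _ _)
  obtain ⟨u, hu, hfu⟩ := exists_mem_nhds_setLIntegral_lt_top (ENNReal.ofReal_pos.mpr hc).ne'
    (hkc.mono fun _ ↦ ENNReal.ofReal_le_ofReal) hpos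
  refine ⟨u, hu, ?_⟩
  have hint := integrable_toReal_of_lintegral_ne_top hf.aemeasurable.ennreal_ofReal.restrict hfu.ne
  simp only [ENNReal.toReal_ofReal'] at hint
  exact hint

/- Since `ENNReal.ofReal` truncates, `hE` only bounds the positive part of the energy density. This
still controls both `f⁺` and `f⁻`, since the density is invariant under `f ↦ -f`. -/
theorem finite_energy_locallyIntegrable_general {k : X → X → ℝ} {f : X → ℝ}
    (hf : AEStronglyMeasurable f μ) (hk : ∀ x, ∃ c > 0, ∀ᶠ p in 𝓝 (x, x), c ≤ k p.1 p.2)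
    (hE : ∫⁻ x, ∫⁻ y, ENNReal.ofReal (k x y * f x * f y) ∂μ ∂μ < ⊤) :
    LocallyIntegrable f μ := by
  have hneg : LocallyIntegrable f⁻ μ := by
    rw [← posPart_neg]
    refine locallyIntegrable_posPart_of_energy_lt_top hf.neg hk ?_
    simpa only [Pi.neg_apply, mul_neg, neg_mul, neg_neg] using hE
  rw [← posPart_sub_negPart f]
  exact (locallyIntegrable_posPart_of_energy_lt_top hf hk hE).sub hneg

end EnergyKernel

lemma inv_one_add_norm_le_K1 (z : E3) : (1 + ‖z‖)⁻¹ ≤ K1 z := by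
  rcases eq_or_ne z 0 with rfl | hz
  · simp [K1]
  have hz' : 0 < ‖z‖ := norm_pos_iff.mpr hz
  have hexp : exp (-‖z‖) ≤ (1 + ‖z‖)⁻¹ := by
    rw [exp_neg]
    gcongr
    linarith [add_one_le_exp ‖z‖]
  rw [K1, if_neg hz, le_div_iff₀ hz']
  calc (1 + ‖z‖)⁻¹ * ‖z‖ = 1 - (1 + ‖z‖)⁻¹ := by field_simp; ring
    _ ≤ 1 - exp (-‖z‖) := by gcongr

lemma eventually_half_le_K1_sub (x : E3) : ∀ᶠ p in 𝓝 (x, x), 1 / 2 ≤ K1 (p.1 - p.2) := by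
  have hcont : ContinuousAt (fun p : E3 × E3 ↦ (1 + ‖p.1 - p.2‖)⁻¹) (x, x) :=
    ContinuousAt.inv₀ (by fun_prop) (by simp)
  have hhalf : (1 / 2 : ℝ) < (1 + ‖x - x‖)⁻¹ := by norm_num
  filter_upwards [hcont.eventually_const_lt hhalf] with p hp
  exact hp.le.trans (inv_one_add_norm_le_K1 _)

/-- Finite Bopp–Podolsky energy implies local integrability. -/
theorem finite_energy_locallyIntegrable (f : E3 → ℝ) (hf : Measurable f)
    (hf0 : ∀ x, 0 ≤ f x) (hV : Vlin f f < ⊤) :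
    LocallyIntegrable f volume := by
  exact finite_energy_locallyIntegrable_general (k := fun x y ↦ K1 (x - y))
    hf.aestronglyMeasurable (fun x ↦ ⟨1 / 2, by norm_num, eventually_half_le_K1_sub x⟩) hV
end
end

section
/- (Strict positivity of the Bopp–Podolsky energy on its finiteness domain.) Let K : ℝ³ → ℝ be defined by K(x) = (1 - exp(-‖x‖))/‖x‖ for x ≠ 0 and K(0) = 1, and set V(f,f) = ∫_{ℝ³}∫_{ℝ³} K(x-y) f(x) f(y) dx dy. If f : ℝ³ → ℝ is measurable, not almost everywhere zero, and satisfies V(|f|,|f|) < ∞, then V(f,f) > 0. -/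
open MeasureTheory Real
open scoped ENNReal Classical

noncomputable section

/-!
The kernel is a Gaussian mixture: `K(x) = 𝔼 exp (-S²‖x‖² / (2Z²))` with `S` uniform on `(0, 1]` and
`Z` standard Gaussian. Indeed `K(x)` is the average of `exp (-s‖x‖)` over `s ∈ (0, 1]`, and
`𝔼 exp (-a² / (2Z²)) = exp (-a)` because completing the square turns the exponent
`-z² / 2 - a² / (2z²)` into `-(z - a / z)² / 2 - a`, while Boole's map `z ↦ z - a / z` preserves
Lebesgue measure.

For a single Gaussian, `exp (-b‖x - y‖²)` is a multiple of
`∫ exp (-2b‖x - z‖²) exp (-2b‖y - z‖²) dz`, so its energy is a multiple of the squared `L²` norm of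
the Gaussian transform `z ↦ ∫ exp (-2b‖x - z‖²) f(x) dx`. If that vanishes, so does the two-sided
Laplace transform of `exp (-2b‖x‖²) f(x)` on a dense set, and hence `f = 0` almost everywhere by
uniqueness of Laplace transforms.
-/

open Set ProbabilityTheory

lemma hasDerivAt_sub_div {b x : ℝ} (hx : x ≠ 0) :
    HasDerivAt (fun x : ℝ => x - b / x) (1 + b / x ^ 2) x :=
  ((hasDerivAt_id' x).sub ((hasDerivAt_const x b).div (hasDerivAt_id' x) hx)).congr_deriv (by ring)

lemma bijOn_sub_div {b : ℝ} (hb : 0 < b) : BijOn (fun x : ℝ => x - b / x) (Ioi 0) univ := by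
  refine ⟨mapsTo_univ _ _, StrictMonoOn.injOn fun x hx y _ hxy => ?_, fun y _ => ?_⟩
  · have : b / y < b / x := div_lt_div_of_pos_left hb hx hxy
    linarith
  · have hs : 0 ≤ y ^ 2 + 4 * b := by positivity
    have hlt : |y| < √(y ^ 2 + 4 * b) := lt_sqrt_of_sq_lt (by rw [sq_abs]; linarith)
    have hpos : 0 < y + √(y ^ 2 + 4 * b) := by linarith [neg_abs_le y]
    refine ⟨(y + √(y ^ 2 + 4 * b)) / 2, by simpa using hpos, ?_⟩
    field_simp
    linarith [sq_sqrt hs]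

lemma bijOn_neg_div {b : ℝ} (hb : 0 < b) : BijOn (fun x : ℝ => -(b / x)) (Ioi 0) (Iio 0) := by
  refine InvOn.bijOn (f' := fun x => -(b / x)) ⟨fun x hx => ?_, fun x hx => ?_⟩
    (fun x hx => ?_) (fun x hx => ?_)
  · have := (mem_Ioi.1 hx).ne'
    field_simp
  · have := (mem_Iio.1 hx).ne
    field_simp
  · exact neg_lt_zero.2 (div_pos hb hx)
  · exact neg_pos.2 (div_neg_of_pos_of_neg hb hx)

/- The involution `x ↦ -b / x` exchanges the two half-lines and preserves `x - b / x`. -/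
lemma setLIntegral_Iio_comp_sub_div {b : ℝ} (hb : 0 < b) (F : ℝ → ℝ≥0∞) :
    ∫⁻ x in Iio 0, F (x - b / x) = ∫⁻ x in Ioi 0, ENNReal.ofReal (b / x ^ 2) * F (x - b / x) := by
  have hderiv : ∀ x ∈ Ioi (0 : ℝ),
      HasDerivWithinAt (fun x : ℝ => -(b / x)) (b / x ^ 2) (Ioi 0) x := fun x hx =>
    (((hasDerivAt_const x b).div (hasDerivAt_id' x) (mem_Ioi.1 hx).ne').neg.congr_deriv
      (by ring)).hasDerivWithinAt
  rw [← (bijOn_neg_div hb).image_eq, lintegral_image_eq_lintegral_abs_deriv_mul measurableSet_Ioi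
    hderiv (bijOn_neg_div hb).injOn]
  refine setLIntegral_congr_fun measurableSet_Ioi fun x hx => ?_
  have hx : 0 < x := hx
  have hinv : -(b / x) - b / -(b / x) = x - b / x := by field_simp; ring
  simp only [hinv, abs_of_pos (show 0 < b / x ^ 2 by positivity)]

lemma lintegral_comp_sub_div {b : ℝ} (hb : 0 < b) {F : ℝ → ℝ≥0∞} (hF : Measurable F) :
    ∫⁻ x, F (x - b / x) = ∫⁻ x, F x :=
  calc ∫⁻ x, F (x - b / x)
      = (∫⁻ x in Iio 0, F (x - b / x)) + ∫⁻ x in Ioi 0, F (x - b / x) := by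
        rw [← lintegral_add_compl _ measurableSet_Iio, compl_Iio,
          setLIntegral_congr Ioi_ae_eq_Ici]
    _ = ∫⁻ x in Ioi 0, (ENNReal.ofReal (b / x ^ 2) * F (x - b / x) + F (x - b / x)) := by
        rw [setLIntegral_Iio_comp_sub_div hb, lintegral_add_right _ (by fun_prop)]
    _ = ∫⁻ x in Ioi 0, ENNReal.ofReal |1 + b / x ^ 2| * F (x - b / x) := by
        refine setLIntegral_congr_fun measurableSet_Ioi fun x _ => ?_
        rw [abs_of_nonneg (by positivity), ENNReal.ofReal_add zero_le_one (by positivity),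
          ENNReal.ofReal_one, add_mul, one_mul, add_comm]
    _ = ∫⁻ x, F x := by
        rw [← lintegral_image_eq_lintegral_abs_deriv_mul measurableSet_Ioi
          (fun x hx => (hasDerivAt_sub_div (mem_Ioi.1 hx).ne').hasDerivWithinAt)
          (bijOn_sub_div hb).injOn, (bijOn_sub_div hb).image_eq, setLIntegral_univ]

theorem measurePreserving_sub_div {b : ℝ} (hb : 0 ≤ b) :
    MeasurePreserving (fun x : ℝ => x - b / x) := by
  rcases hb.eq_or_lt with rfl | hb
  · simpa using! MeasurePreserving.id (volume : Measure ℝ)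
  · have hmeas : Measurable fun x : ℝ => x - b / x := by fun_prop
    refine ⟨hmeas, Measure.ext_of_lintegral _ fun F hF => ?_⟩
    rw [lintegral_map hF hmeas, lintegral_comp_sub_div hb hF]

lemma integral_exp_neg_sq_div_gaussianReal {a : ℝ} (ha : 0 ≤ a) :
    ∫ z, exp (-(a ^ 2 / (2 * z ^ 2))) ∂gaussianReal 0 1 = exp (-a) := by
  have hpdf : ∀ z ≠ 0, gaussianPDFReal 0 1 z * exp (-(a ^ 2 / (2 * z ^ 2))) =
      gaussianPDFReal 0 1 (z - a / z) * exp (-a) := fun z hz => by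
    simp only [gaussianPDFReal, mul_assoc, ← exp_add]
    congr 2
    norm_num
    field_simp
    ring
  calc ∫ z, exp (-(a ^ 2 / (2 * z ^ 2))) ∂gaussianReal 0 1
      = ∫ z, gaussianPDFReal 0 1 (z - a / z) * exp (-a) := by
        rw [integral_gaussianReal_eq_integral_smul one_ne_zero]
        exact integral_congr_ae ((Measure.ae_ne volume 0).mono hpdf)
    _ = (∫ z, gaussianPDFReal 0 1 z) * exp (-a) := by
        rw [integral_mul_const]
        nth_rewrite 2 [← (measurePreserving_sub_div ha).map_eq]
        rw [integral_map (by fun_prop) (by fun_prop)]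
    _ = exp (-a) := by
        rw [integral_gaussianPDFReal_eq_one 0 one_ne_zero, one_mul]

section
variable {α : Type*} [MeasurableSpace α] {μ : Measure α} {g φ : α → ℝ}

lemma integrable_withDensity_ofReal (hg : AEMeasurable g μ) (hφ : AEStronglyMeasurable φ μ)
    (h : Integrable (fun x => φ x * g x) μ) :
    Integrable φ (μ.withDensity fun x => ENNReal.ofReal (g x)) := by
  rw [integrable_withDensity_iff_integrable_smul₀' hg.ennreal_ofReal (by simp)]
  refine h.mono (hg.ennreal_ofReal.ennreal_toReal.aestronglyMeasurable.smul hφ)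
    (ae_of_all _ fun x => ?_)
  rw [norm_smul, norm_mul, mul_comm, ENNReal.toReal_ofReal', norm_of_nonneg (le_max_right _ _)]
  gcongr
  exact max_le (le_abs_self _) (abs_nonneg _)

lemma integral_withDensity_ofReal_sub (hg : AEMeasurable g μ) (hφ : AEStronglyMeasurable φ μ)
    (h : Integrable (fun x => φ x * g x) μ) :
    (∫ x, φ x ∂μ.withDensity fun x => ENNReal.ofReal (g x)) -
      (∫ x, φ x ∂μ.withDensity fun x => ENNReal.ofReal (-g x)) = ∫ x, φ x * g x ∂μ := by
  have hp := integrable_withDensity_ofReal hg hφ h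
  have hm := integrable_withDensity_ofReal hg.neg hφ (by simpa using h.neg)
  simp only [Pi.neg_apply] at hm
  rw [integrable_withDensity_iff_integrable_smul₀' (by fun_prop) (by simp)] at hp hm
  rw [integral_withDensity_eq_integral_toReal_smul₀ (by fun_prop) (by simp),
    integral_withDensity_eq_integral_toReal_smul₀ (by fun_prop) (by simp), ← integral_sub hp hm]
  refine integral_congr_ae (ae_of_all _ fun x => ?_)
  beta_reduce
  rw [← sub_smul, ENNReal.toReal_ofReal', ENNReal.toReal_ofReal',
    max_zero_sub_max_neg_zero_eq_self, smul_eq_mul, mul_comm]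
end

section
variable {E : Type*} [NormedAddCommGroup E] [InnerProductSpace ℝ E] [MeasurableSpace E]
  {μ ν : Measure E}

lemma convexOn_integral_exp_inner (hμ : ∀ w, Integrable (fun x => exp (inner ℝ x w)) μ) :
    ConvexOn ℝ univ fun w => ∫ x, exp (inner ℝ x w) ∂μ := by
  refine ⟨convex_univ, fun v _ w _ a b ha hb hab => ?_⟩
  simp only [smul_eq_mul, ← integral_const_mul]
  rw [← integral_add ((hμ v).const_mul a) ((hμ w).const_mul b)]
  refine integral_mono (hμ _) (((hμ v).const_mul a).add ((hμ w).const_mul b)) fun x => ?_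
  simpa only [inner_add_right, inner_smul_right, smul_eq_mul] using
    convexOn_exp.2 (mem_univ (inner ℝ x v)) (mem_univ (inner ℝ x w)) ha hb hab

variable [BorelSpace E] [FiniteDimensional ℝ E]

lemma ext_of_integral_exp_inner (hμ : ∀ w, Integrable (fun x => exp (inner ℝ x w)) μ)
    (hν : ∀ w, Integrable (fun x => exp (inner ℝ x w)) ν)
    (h : ∀ w, ∫ x, exp (inner ℝ x w) ∂μ = ∫ x, exp (inner ℝ x w) ∂ν) : μ = ν := by
  have : IsFiniteMeasure μ :=
    (integrable_const_iff_isFiniteMeasure one_ne_zero).1 (by simpa using hμ 0)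
  have : IsFiniteMeasure ν :=
    (integrable_const_iff_isFiniteMeasure one_ne_zero).1 (by simpa using hν 0)
  have hzero : μ = 0 ↔ ν = 0 := by
    have hmass : μ.real univ = ν.real univ := by simpa using h 0
    rw [← Measure.measure_univ_eq_zero, ← Measure.measure_univ_eq_zero, ← measureReal_eq_zero_iff,
      ← measureReal_eq_zero_iff, hmass]
  refine Measure.ext_of_charFun (funext fun w => ?_)
  have hmgf : mgf (fun x : E => inner ℝ x w) μ = mgf (fun x : E => inner ℝ x w) ν := by
    funext t
    simpa only [inner_smul_right, mgf] using h (t • w)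
  have hset : integrableExpSet (fun x : E => inner ℝ x w) μ = univ :=
    eq_univ_of_forall fun t => by simpa only [inner_smul_right] using! hμ (t • w)
  have := eqOn_complexMGF_of_mgf' hmgf hzero (x := Complex.I) (by simp [hset])
  simpa only [complexMGF, charFun_apply, mul_comm] using this

lemma ext_of_eqOn_integral_exp_inner {s : Set E} (hs : Dense s)
    (hμ : ∀ w, Integrable (fun x => exp (inner ℝ x w)) μ)
    (hν : ∀ w, Integrable (fun x => exp (inner ℝ x w)) ν)
    (h : EqOn (fun w => ∫ x, exp (inner ℝ x w) ∂μ) (fun w => ∫ x, exp (inner ℝ x w) ∂ν) s) :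
    μ = ν :=
  ext_of_integral_exp_inner hμ hν <| congrFun <| Continuous.ext_on hs
    (convexOn_integral_exp_inner hμ).locallyLipschitz.continuous
    (convexOn_integral_exp_inner hν).locallyLipschitz.continuous h

theorem ae_eq_zero_of_integral_exp_inner_mul_eq_zero [SigmaFinite μ] {g : E → ℝ} {s : Set E}
    (hs : Dense s) (hg : ∀ w, Integrable (fun x => exp (inner ℝ x w) * g x) μ)
    (hzero : ∀ w ∈ s, ∫ x, exp (inner ℝ x w) * g x ∂μ = 0) : g =ᵐ[μ] 0 := by
  have hgm : AEMeasurable g μ := by simpa using (hg 0).aemeasurable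
  have hexp : ∀ w, AEStronglyMeasurable (fun x : E => exp (inner ℝ x w)) μ := fun w => by fun_prop
  have heq : μ.withDensity (fun x => ENNReal.ofReal (g x)) =
      μ.withDensity (fun x => ENNReal.ofReal (-g x)) := by
    refine ext_of_eqOn_integral_exp_inner hs
      (fun w => integrable_withDensity_ofReal hgm (hexp w) (hg w))
      (fun w => integrable_withDensity_ofReal hgm.neg (hexp w) (by simpa using (hg w).neg))
      fun w hw => sub_eq_zero.1 ?_
    rw [integral_withDensity_ofReal_sub hgm (hexp w) (hg w), hzero w hw]
  filter_upwards [(withDensity_eq_iff_of_sigmaFinite hgm.ennreal_ofReal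
    hgm.neg.ennreal_ofReal).1 heq] with x hx
  rw [Pi.neg_apply] at hx
  rw [Pi.zero_apply, ← max_zero_sub_max_neg_zero_eq_self (g x), ← ENNReal.toReal_ofReal',
    ← ENNReal.toReal_ofReal', hx, sub_self]
end

section
variable {α β : Type*} [MeasurableSpace α] [MeasurableSpace β] {μ : Measure α} {ν : Measure β}
  [SFinite ν] {κ : α → β → ℝ} {g : α → ℝ}

lemma integrable_mul_of_integrable_integral_mul (hκ : Measurable (Function.uncurry κ))
    (hκ_nonneg : 0 ≤ κ) (hκ_int : ∀ x, Integrable (κ x) ν) (hg : AEStronglyMeasurable g μ)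
    (h : Integrable (fun x => (∫ y, κ x y ∂ν) * g x) μ) :
    Integrable (fun p : α × β => κ p.1 p.2 * g p.1) (μ.prod ν) := by
  have hmeas : AEStronglyMeasurable (fun p : α × β => κ p.1 p.2 * g p.1) (μ.prod ν) :=
    hκ.aestronglyMeasurable.mul hg.comp_fst
  refine (integrable_prod_iff hmeas).2
    ⟨ae_of_all _ fun x => (hκ_int x).mul_const (g x), ?_⟩
  refine h.norm.congr (ae_of_all _ fun x => ?_)
  simp only [norm_mul, integral_mul_const, norm_of_nonneg (hκ_nonneg x _),
    norm_of_nonneg (integral_nonneg (hκ_nonneg x))]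

lemma integral_integral_mul_swap [SFinite μ]
    (h : Integrable (fun p : α × β => κ p.1 p.2 * g p.1) (μ.prod ν)) :
    ∫ x, (∫ y, κ x y ∂ν) * g x ∂μ = ∫ y, ∫ x, κ x y * g x ∂μ ∂ν := by
  rw [← integral_integral_swap (f := fun x y => κ x y * g x) h]
  simp only [integral_mul_const]

lemma integral_prod_mul_mul_eq_sq [SFinite μ] (k f : α → ℝ) :
    ∫ p : α × α, k p.1 * k p.2 * (f p.1 * f p.2) ∂μ.prod μ = (∫ x, k x * f x ∂μ) ^ 2 := by
  rw [sq, ← integral_prod_mul]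
  exact integral_congr_ae (ae_of_all _ fun p => mul_mul_mul_comm _ _ _ _)
end

/-- The integrand `κ(x - y) f(x) f(y)` of the energy of `f` for the convolution kernel `κ`, as a
function of the pair `(x, y)`. -/
def energyIntegrand {E : Type*} [Sub E] (κ f : E → ℝ) (p : E × E) : ℝ :=
  κ (p.1 - p.2) * (f p.1 * f p.2)

lemma integrable_energyIntegrand_of_lintegral_lt_top {E : Type*} [Sub E] [MeasurableSpace E]
    [MeasurableSub₂ E] {μ : Measure E} [SFinite μ] {κ f : E → ℝ} (hκ : Measurable κ)
    (hκ_nonneg : 0 ≤ κ) (hf : AEMeasurable f μ)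
    (h : ∫⁻ x, ∫⁻ y, ENNReal.ofReal (κ (x - y) * |f x| * |f y|) ∂μ ∂μ < ⊤) :
    Integrable (energyIntegrand κ f) (μ.prod μ) := by
  have hmeas : AEMeasurable (energyIntegrand κ f) (μ.prod μ) :=
    (hκ.comp measurable_sub).aemeasurable.mul (hf.comp_fst.mul hf.comp_snd)
  refine ⟨hmeas.aestronglyMeasurable, (hasFiniteIntegral_iff_norm _).2 ?_⟩
  rw [lintegral_prod _ hmeas.norm.ennreal_ofReal]
  simpa only [energyIntegrand, norm_mul, norm_of_nonneg (hκ_nonneg _), norm_eq_abs, mul_assoc]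
    using h

section
variable {E : Type*} [NormedAddCommGroup E]

/-- The centred Gaussian profile `x ↦ exp (-b‖x‖²)`, not normalised. -/
def gaussianProfile (b : ℝ) (x : E) : ℝ := exp (-b * ‖x‖ ^ 2)

/-- The mixture `x ↦ ∫ exp (-b‖x‖²) dρ(b)` of Gaussian profiles whose inverse squared width `b` has
law `ρ`: the class of kernels for which the energy is shown to be positive. -/
def gaussianMixture (ρ : Measure ℝ) (x : E) : ℝ := ∫ b, gaussianProfile b x ∂ρ

lemma gaussianProfile_pos (b : ℝ) (x : E) : 0 < gaussianProfile b x := exp_pos _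

@[fun_prop]
lemma continuous_gaussianProfile (b : ℝ) : Continuous (gaussianProfile b : E → ℝ) := by
  unfold gaussianProfile
  fun_prop

lemma integrable_gaussianProfile_left {ρ : Measure ℝ} [IsFiniteMeasure ρ] (hρ : ∀ᵐ b ∂ρ, 0 ≤ b)
    (x : E) : Integrable (fun b => gaussianProfile b x) ρ := by
  unfold gaussianProfile
  refine Integrable.of_bound (by fun_prop) 1 (hρ.mono fun b hb => ?_)
  rw [norm_of_nonneg (exp_nonneg _), exp_le_one_iff]
  nlinarith [sq_nonneg ‖x‖]

lemma gaussianProfile_two_mul_sub_le {b : ℝ} (hb : 0 ≤ b) (x y z : E) :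
    gaussianProfile (2 * b) (x - z) ≤ exp (2 * b * ‖z - y‖ ^ 2) * gaussianProfile b (x - y) := by
  have htri : ‖x - y‖ ^ 2 ≤ 2 * (‖x - z‖ ^ 2 + ‖z - y‖ ^ 2) :=
    (pow_le_pow_left₀ (norm_nonneg _) (norm_sub_le_norm_sub_add_norm_sub x z y) 2).trans
      add_sq_le
  rw [gaussianProfile, gaussianProfile, ← exp_add, exp_le_exp]
  nlinarith

/-- The Gaussian transform `z ↦ ∫ exp (-b‖x - z‖²) f(x) dμ(x)`, whose squared `L²` norm is a
multiple of the energy of `f` for the kernel `gaussianProfile (b / 2)`. -/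
def gaussianTransform [MeasurableSpace E] (μ : Measure E) (b : ℝ) (f : E → ℝ) (z : E) : ℝ :=
  ∫ x, gaussianProfile b (x - z) * f x ∂μ

variable [InnerProductSpace ℝ E]

lemma gaussianProfile_sub_mul_gaussianProfile_sub (b : ℝ) (x y z : E) :
    gaussianProfile (2 * b) (x - z) * gaussianProfile (2 * b) (y - z) =
      gaussianProfile (4 * b) (z - (1 / 2 : ℝ) • (x + y)) * gaussianProfile b (x - y) := by
  have hmid : (x - z) + (y - z) = (-2 : ℝ) • (z - (1 / 2 : ℝ) • (x + y)) := by module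
  have hpar := parallelogram_law_with_norm ℝ (x - z) (y - z)
  rw [hmid, sub_sub_sub_cancel_right, norm_smul, norm_neg, norm_ofNat] at hpar
  simp only [gaussianProfile, ← exp_add]
  congr 1
  linear_combination b * hpar

lemma exp_inner_mul_gaussianProfile {b : ℝ} (hb : b ≠ 0) (x w : E) :
    exp (inner ℝ x w) * gaussianProfile b x =
      exp (b * ‖(2 * b)⁻¹ • w‖ ^ 2) * gaussianProfile b (x - (2 * b)⁻¹ • w) := by
  simp only [gaussianProfile, ← exp_add, norm_sub_sq_real, inner_smul_right]
  congr 1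
  field_simp
  ring

variable [FiniteDimensional ℝ E] [MeasurableSpace E] [BorelSpace E]

lemma integral_gaussianProfile_pos {b : ℝ} (hb : 0 < b) : 0 < ∫ z : E, gaussianProfile b z := by
  unfold gaussianProfile
  rw [GaussianFourier.integral_rexp_neg_mul_sq_norm hb]
  positivity

lemma integrable_gaussianProfile {b : ℝ} (hb : 0 < b) :
    Integrable (gaussianProfile b : E → ℝ) :=
  not_imp_comm.1 integral_undef (integral_gaussianProfile_pos hb).ne'

lemma integrable_gaussianProfile_sub_mul_gaussianProfile_sub {b : ℝ} (hb : 0 < b) (x y : E) :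
    Integrable fun z => gaussianProfile (2 * b) (x - z) * gaussianProfile (2 * b) (y - z) := by
  simp_rw [gaussianProfile_sub_mul_gaussianProfile_sub]
  exact ((integrable_gaussianProfile (by positivity)).comp_sub_right _).mul_const _

lemma integral_gaussianProfile_sub_mul_gaussianProfile_sub (b : ℝ) (x y : E) :
    ∫ z, gaussianProfile (2 * b) (x - z) * gaussianProfile (2 * b) (y - z) =
      (∫ z : E, gaussianProfile (4 * b) z) * gaussianProfile b (x - y) := by
  simp_rw [gaussianProfile_sub_mul_gaussianProfile_sub]
  rw [integral_mul_const, integral_sub_right_eq_self]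

variable {μ : Measure E} {f : E → ℝ}

lemma integrable_gaussianProfile_mul_gaussianProfile_mul {b : ℝ} (hb : 0 < b)
    (hf : AEStronglyMeasurable f μ)
    (hint : Integrable (energyIntegrand (gaussianProfile b) f) (μ.prod μ)) :
    Integrable (fun q : (E × E) × E => gaussianProfile (2 * b) (q.1.1 - q.2) *
      gaussianProfile (2 * b) (q.1.2 - q.2) * (f q.1.1 * f q.1.2)) ((μ.prod μ).prod volume) := by
  refine integrable_mul_of_integrable_integral_mul
    (κ := fun (p : E × E) z =>
      gaussianProfile (2 * b) (p.1 - z) * gaussianProfile (2 * b) (p.2 - z))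
    (g := fun p : E × E => f p.1 * f p.2) (by fun_prop)
    (fun p z => (mul_pos (gaussianProfile_pos _ _) (gaussianProfile_pos _ _)).le)
    (fun p => integrable_gaussianProfile_sub_mul_gaussianProfile_sub hb p.1 p.2)
    (hf.comp_fst.mul hf.comp_snd) ?_
  simp only [integral_gaussianProfile_sub_mul_gaussianProfile_sub, mul_assoc]
  exact hint.const_mul _

lemma integrable_gaussianTransform_sq [SFinite μ] {b : ℝ} (hb : 0 < b)
    (hf : AEStronglyMeasurable f μ)
    (hint : Integrable (energyIntegrand (gaussianProfile b) f) (μ.prod μ)) :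
    Integrable fun z => gaussianTransform μ (2 * b) f z ^ 2 :=
  (integrable_gaussianProfile_mul_gaussianProfile_mul hb hf hint).integral_prod_right.congr <|
    ae_of_all _ fun z => integral_prod_mul_mul_eq_sq (fun x => gaussianProfile (2 * b) (x - z)) f

lemma integral_energyIntegrand_gaussianProfile_eq [SFinite μ] {b : ℝ} (hb : 0 < b)
    (hf : AEStronglyMeasurable f μ)
    (hint : Integrable (energyIntegrand (gaussianProfile b) f) (μ.prod μ)) :
    (∫ z : E, gaussianProfile (4 * b) z) *
        ∫ p, energyIntegrand (gaussianProfile b) f p ∂μ.prod μ =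
      ∫ z, gaussianTransform μ (2 * b) f z ^ 2 := by
  have hswap := integral_integral_mul_swap
    (κ := fun (p : E × E) z =>
      gaussianProfile (2 * b) (p.1 - z) * gaussianProfile (2 * b) (p.2 - z))
    (g := fun p : E × E => f p.1 * f p.2)
    (integrable_gaussianProfile_mul_gaussianProfile_mul hb hf hint)
  simp only [integral_gaussianProfile_sub_mul_gaussianProfile_sub, mul_assoc (∫ _ : E, _),
    integral_const_mul] at hswap
  refine hswap.trans (integral_congr_ae (ae_of_all _ fun z => ?_))
  exact integral_prod_mul_mul_eq_sq (fun x => gaussianProfile (2 * b) (x - z)) f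

lemma integrable_gaussianProfile_sub_mul [SFinite μ] {b : ℝ} (hb : 0 ≤ b)
    (hf : AEStronglyMeasurable f μ) (hf0 : ¬ f =ᵐ[μ] 0)
    (hint : Integrable (energyIntegrand (gaussianProfile b) f) (μ.prod μ)) (z : E) :
    Integrable (fun x => gaussianProfile (2 * b) (x - z) * f x) μ := by
  obtain ⟨y, hy, hy0⟩ := (hint.prod_left_ae.and_frequently (Filter.not_eventually.1 hf0)).exists
  have hbase : Integrable (fun x => gaussianProfile b (x - y) * f x) μ := by
    simpa [energyIntegrand, mul_assoc, mul_inv_cancel₀ hy0] using hy.mul_const (f y)⁻¹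
  refine (hbase.const_mul (exp (2 * b * ‖z - y‖ ^ 2))).mono (by fun_prop) (ae_of_all _ fun x => ?_)
  simp only [norm_mul, norm_of_nonneg (exp_nonneg _), norm_of_nonneg (gaussianProfile_pos _ _).le,
    ← mul_assoc]
  gcongr
  exact gaussianProfile_two_mul_sub_le hb x y z

variable [SigmaFinite μ]

lemma ae_eq_zero_of_gaussianTransform_eq_zero {b : ℝ} (hb : b ≠ 0) {s : Set E} (hs : Dense s)
    (hf : ∀ z, Integrable (fun x => gaussianProfile b (x - z) * f x) μ)
    (hzero : ∀ z ∈ s, gaussianTransform μ b f z = 0) : f =ᵐ[μ] 0 := by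
  have hshift : ∀ w x : E, exp (inner ℝ x w) * (gaussianProfile b x * f x) =
      exp (b * ‖(2 * b)⁻¹ • w‖ ^ 2) * (gaussianProfile b (x - (2 * b)⁻¹ • w) * f x) := fun w x => by
    rw [← mul_assoc, exp_inner_mul_gaussianProfile hb, mul_assoc]
  have hc : (2 * b)⁻¹ ≠ 0 := by positivity
  have hdense : Dense ((fun w : E => (2 * b)⁻¹ • w) ⁻¹' s) := hs.preimage (isOpenMap_smul₀ hc)
  have hweighted : (fun x => gaussianProfile b x * f x) =ᵐ[μ] 0 :=
    ae_eq_zero_of_integral_exp_inner_mul_eq_zero hdense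
      (fun w => by simpa only [hshift] using (hf _).const_mul _)
      (fun w hw => by
        simp_rw [hshift]
        rw [integral_const_mul, ← gaussianTransform, hzero _ hw, mul_zero])
  exact hweighted.mono fun x hx => (mul_eq_zero.1 hx).resolve_left (gaussianProfile_pos b x).ne'

theorem integral_energyIntegrand_gaussianProfile_pos {b : ℝ} (hb : 0 < b)
    (hf : AEStronglyMeasurable f μ) (hf0 : ¬ f =ᵐ[μ] 0)
    (hint : Integrable (energyIntegrand (gaussianProfile b) f) (μ.prod μ)) :
    0 < ∫ p, energyIntegrand (gaussianProfile b) f p ∂μ.prod μ := by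
  refine pos_of_mul_pos_right (a := ∫ z : E, gaussianProfile (4 * b) z) ?_
    (integral_gaussianProfile_pos (by positivity)).le
  rw [integral_energyIntegrand_gaussianProfile_eq hb hf hint]
  refine (integral_nonneg fun z => sq_nonneg _).lt_of_ne' fun hzero => hf0 ?_
  rw [integral_eq_zero_iff_of_nonneg (fun z => sq_nonneg _)
    (integrable_gaussianTransform_sq hb hf hint)] at hzero
  exact ae_eq_zero_of_gaussianTransform_eq_zero (by positivity) (Measure.dense_of_ae hzero)
    (integrable_gaussianProfile_sub_mul hb.le hf hf0 hint)
    fun z hz => (pow_eq_zero_iff two_ne_zero).1 hz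

theorem integral_energyIntegrand_gaussianMixture_pos {ρ : Measure ℝ} [IsFiniteMeasure ρ] [NeZero ρ]
    (hρ : ∀ᵐ b ∂ρ, 0 < b) (hf : AEStronglyMeasurable f μ) (hf0 : ¬ f =ᵐ[μ] 0)
    (hint : Integrable (energyIntegrand (gaussianMixture ρ) f) (μ.prod μ)) :
    0 < ∫ p, energyIntegrand (gaussianMixture ρ) f p ∂μ.prod μ := by
  have hmeas : Measurable fun q : (E × E) × ℝ => gaussianProfile q.2 (q.1.1 - q.1.2) := by
    unfold gaussianProfile
    fun_prop
  have hκf : Integrable (fun q : (E × E) × ℝ => energyIntegrand (gaussianProfile q.2) f q.1)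
      ((μ.prod μ).prod ρ) :=
    integrable_mul_of_integrable_integral_mul
      (κ := fun (p : E × E) b => gaussianProfile b (p.1 - p.2)) hmeas
      (fun p b => (gaussianProfile_pos _ _).le)
      (fun p => integrable_gaussianProfile_left (hρ.mono fun _ => le_of_lt) (p.1 - p.2))
      (hf.comp_fst.mul hf.comp_snd) hint
  have hpos : ∀ᵐ b ∂ρ, 0 < ∫ p, energyIntegrand (gaussianProfile b) f p ∂μ.prod μ := by
    filter_upwards [hρ, hκf.prod_left_ae] with b hb hintb
    exact integral_energyIntegrand_gaussianProfile_pos hb hf hf0 hintb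
  have hnonneg := hpos.mono fun b hb => hb.le
  have hswap : ∫ p, energyIntegrand (gaussianMixture ρ) f p ∂μ.prod μ =
      ∫ b, ∫ p, energyIntegrand (gaussianProfile b) f p ∂μ.prod μ ∂ρ :=
    integral_integral_mul_swap (κ := fun (p : E × E) b => gaussianProfile b (p.1 - p.2)) hκf
  rw [hswap]
  refine (integral_nonneg_of_ae hnonneg).lt_of_ne' fun hzero => ?_
  rw [integral_eq_zero_iff_of_nonneg_ae hnonneg hκf.integral_prod_right] at hzero
  obtain ⟨b, hb, hb0⟩ := (hpos.and hzero).exists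
  exact hb.ne' hb0
end

/-- The Bopp–Podolsky kernel with `a = 1` on an arbitrary normed group, extended by its limit `1` at
the origin. -/
def boppPodolskyKernel {E : Type*} [NormedAddCommGroup E] (x : E) : ℝ :=
  if x = 0 then 1 else (1 - exp (-‖x‖)) / ‖x‖

/-- The law of `S² / (2Z²)`, where `S` is uniform on `(0, 1]` and `Z` is an independent standard
Gaussian: the mixing measure that represents the Bopp–Podolsky kernel as a Gaussian mixture. The
value `0` at `Z = 0` is on a null set. -/
def boppPodolskyMixing : Measure ℝ :=
  ((volume.restrict (Ioc 0 1)).prod (gaussianReal 0 1)).map fun p => p.1 ^ 2 / (2 * p.2 ^ 2)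

instance : IsProbabilityMeasure (volume.restrict (Ioc (0 : ℝ) 1)) := ⟨by simp⟩

instance : IsProbabilityMeasure boppPodolskyMixing :=
  Measure.isProbabilityMeasure_map (by fun_prop)

lemma ae_pos_boppPodolskyMixing : ∀ᵐ b ∂boppPodolskyMixing, 0 < b := by
  refine (ae_map_iff (by fun_prop) measurableSet_Ioi).2 ?_
  have hS : ∀ᵐ s ∂volume.restrict (Ioc (0 : ℝ) 1), 0 < s :=
    (ae_restrict_mem measurableSet_Ioc).mono fun s hs => hs.1
  have hZ : ∀ᵐ z ∂gaussianReal 0 1, z ≠ 0 :=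
    have := nullSingletonClass_gaussianReal (μ := 0) one_ne_zero
    Measure.ae_ne _ 0
  filter_upwards [Measure.quasiMeasurePreserving_fst.ae hS,
    Measure.quasiMeasurePreserving_snd.ae hZ] with p hp₁ hp₂
  positivity

lemma integral_exp_neg_mul_norm_eq_boppPodolskyKernel {E : Type*} [NormedAddCommGroup E] (x : E) :
    ∫ s in Ioc 0 1, exp (-(s * ‖x‖)) = boppPodolskyKernel x := by
  rw [boppPodolskyKernel, ← intervalIntegral.integral_of_le zero_le_one]
  split_ifs with hx
  · simp [hx]
  · have hx : -‖x‖ ≠ 0 := neg_ne_zero.2 (norm_ne_zero_iff.2 hx)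
    simp_rw [← mul_neg]
    rw [intervalIntegral.integral_comp_mul_right _ hx, integral_exp, zero_mul, one_mul, exp_zero,
      smul_eq_mul]
    field_simp
    ring

theorem gaussianMixture_boppPodolskyMixing {E : Type*} [NormedAddCommGroup E] :
    gaussianMixture boppPodolskyMixing = (boppPodolskyKernel : E → ℝ) := by
  funext x
  have hmeas : Measurable fun p : ℝ × ℝ => p.1 ^ 2 / (2 * p.2 ^ 2) := by fun_prop
  have hint := integrable_gaussianProfile_left
    (ae_pos_boppPodolskyMixing.mono fun _ => le_of_lt) x
  unfold gaussianMixture gaussianProfile at *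
  rw [boppPodolskyMixing, integrable_map_measure (by fun_prop) hmeas.aemeasurable] at hint
  rw [boppPodolskyMixing, integral_map hmeas.aemeasurable (by fun_prop),
    integral_prod (fun p : ℝ × ℝ => exp (-(p.1 ^ 2 / (2 * p.2 ^ 2)) * ‖x‖ ^ 2)) hint,
    ← integral_exp_neg_mul_norm_eq_boppPodolskyKernel]
  refine setIntegral_congr_fun measurableSet_Ioc fun s hs => ?_
  rw [← integral_exp_neg_sq_div_gaussianReal (mul_nonneg hs.1.le (norm_nonneg x))]
  congr! 3
  ring

lemma boppPodolskyKernel_nonneg {E : Type*} [NormedAddCommGroup E] (x : E) :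
    0 ≤ boppPodolskyKernel x := by
  rw [← integral_exp_neg_mul_norm_eq_boppPodolskyKernel]
  positivity

lemma measurable_boppPodolskyKernel {E : Type*} [NormedAddCommGroup E] [MeasurableSpace E]
    [BorelSpace E] : Measurable (boppPodolskyKernel : E → ℝ) :=
  Measurable.ite (measurableSet_singleton 0) measurable_const (by fun_prop)

theorem energy_pos_general {E : Type*} [NormedAddCommGroup E] [InnerProductSpace ℝ E]
    [FiniteDimensional ℝ E] [MeasurableSpace E] [BorelSpace E] {μ : Measure E} [SigmaFinite μ]
    {f : E → ℝ} (hf : AEMeasurable f μ) (hf0 : ¬ f =ᵐ[μ] 0)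
    (hV : ∫⁻ x, ∫⁻ y, ENNReal.ofReal (boppPodolskyKernel (x - y) * |f x| * |f y|) ∂μ ∂μ < ⊤) :
    0 < ∫ x, ∫ y, boppPodolskyKernel (x - y) * f x * f y ∂μ ∂μ := by
  have hint : Integrable (energyIntegrand boppPodolskyKernel f) (μ.prod μ) :=
    integrable_energyIntegrand_of_lintegral_lt_top measurable_boppPodolskyKernel
      boppPodolskyKernel_nonneg hf hV
  have hpos : 0 < ∫ p, energyIntegrand boppPodolskyKernel f p ∂μ.prod μ := by
    rw [← gaussianMixture_boppPodolskyMixing] at hint ⊢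
    exact integral_energyIntegrand_gaussianMixture_pos ae_pos_boppPodolskyMixing
      hf.aestronglyMeasurable hf0 hint
  rw [integral_prod _ hint] at hpos
  simpa only [energyIntegrand, mul_assoc] using hpos

lemma K1_eq_boppPodolskyKernel : K1 = boppPodolskyKernel := by
  funext x
  simp [K1, boppPodolskyKernel]

/-- Strict positivity of the Bopp–Podolsky energy on its finiteness domain:
if `f` is measurable, not a.e. zero, and `V(|f|,|f|) < ∞`, then `V(f,f) > 0`. -/
theorem energy_pos (f : E3 → ℝ) (hf : Measurable f) (hf0 : ¬ (f =ᵐ[volume] 0))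
    (hV : Vlin (fun x => |f x|) (fun x => |f x|) < ⊤) :
    0 < Vr f f := by
  simp only [Vlin, K1_eq_boppPodolskyKernel] at hV
  simpa only [Vr, K1_eq_boppPodolskyKernel] using energy_pos_general hf.aemeasurable hf0 hV
end
end
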